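/- arXiv:1910.10452 — 6 statements merged into one kernel-verified Lean document; each statement's English description precedes it below -/
import Mathlib

section
/- Let X, Y, Z be Banach spaces, J a compact interval, and Y₀ a Banach space equipped with a continuous linear injection j : Y₀ → Y. Suppose S : J → B(X,Y₀) is strongly continuous and t ↦ j ∘ S(t) is strongly continuously differentiable in B(X,Y) with strong derivative S'(t) ∈ B(X,Y). Suppose R : J → B(Y,Z) is strongly continuous and t ↦ R(t) ∘ j is strongly continuously differentiable in B(Y₀,Z) with strong derivative R'(t) ∈ B(Y₀,Z). Then t ↦ R(t) ∘ j ∘ S(t) is strongly continuously differentiable in B(X,Z), with strong derivative R'(t) ∘ S(t) + R(t) ∘ S'(t). -/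
open Set

lemma strong_tendsto {E F : Type*}
    [NormedAddCommGroup E] [NormedSpace ℝ E] [CompleteSpace E]
    [NormedAddCommGroup F] [NormedSpace ℝ F]
    {a b : ℝ} {T : ℝ → E →L[ℝ] F}
    (hT : ∀ y : E, ContinuousOn (fun t => T t y) (Icc a b))
    {t : ℝ} (ht : t ∈ Icc a b) {s : Set ℝ} (hs : s ⊆ Icc a b)
    {f : ℝ → E} {y : E} (hf : Filter.Tendsto f (nhdsWithin t s) (nhds y)) :
    Filter.Tendsto (fun u => T u (f u)) (nhdsWithin t s) (nhds (T t y)) := by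
  obtain ⟨C, hC⟩ : ∃ C, ∀ i : Icc a b, ‖T i‖ ≤ C := by
    apply banach_steinhaus
    intro y
    obtain ⟨C, hC⟩ := isCompact_Icc.exists_bound_of_continuousOn (hT y)
    exact ⟨C, fun i => hC i i.2⟩
  have h1 : Filter.Tendsto (fun u => T u y) (nhdsWithin t s) (nhds (T t y)) :=
    ((hT y) t ht).mono_left (nhdsWithin_mono t hs)
  have h2 : Filter.Tendsto (fun u => T u (f u - y)) (nhdsWithin t s) (nhds 0) := by
    have h3 : Filter.Tendsto (fun u => C * ‖f u - y‖) (nhdsWithin t s) (nhds 0) := by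
      have h4 := ((hf.sub_const y).norm).const_mul C
      simpa using h4
    refine squeeze_zero_norm' ?_ h3
    filter_upwards [self_mem_nhdsWithin] with u hu
    exact (T u).le_of_opNorm_le (hC ⟨u, hs hu⟩) _
  have h5 := h2.add h1
  simpa using h5

/-- (Product rule for strong differentiation.) Let `X, Y, Z` be Banach spaces,
`J = [a,b]` a compact interval, and `Y₀` a Banach space with a continuous linear injection
`j : Y₀ → Y`. Suppose `S : J → B(X,Y₀)` is strongly continuous and `t ↦ j ∘ S(t)` is strongly
continuously differentiable in `B(X,Y)` with strong derivative `S'(t) ∈ B(X,Y)`; suppose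
`R : J → B(Y,Z)` is strongly continuous and `t ↦ R(t) ∘ j` is strongly continuously
differentiable in `B(Y₀,Z)` with strong derivative `R'(t) ∈ B(Y₀,Z)`. Then
`t ↦ R(t) ∘ j ∘ S(t)` is strongly continuously differentiable in `B(X,Z)` with strong
derivative `R'(t) ∘ S(t) + R(t) ∘ S'(t)`. -/
theorem statement4
    {X Y Z Y₀ : Type*}
    [NormedAddCommGroup X] [NormedSpace ℝ X] [CompleteSpace X]
    [NormedAddCommGroup Y] [NormedSpace ℝ Y] [CompleteSpace Y]
    [NormedAddCommGroup Z] [NormedSpace ℝ Z] [CompleteSpace Z]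
    [NormedAddCommGroup Y₀] [NormedSpace ℝ Y₀] [CompleteSpace Y₀]
    (a b : ℝ) (hab : a ≤ b)
    (j : Y₀ →L[ℝ] Y) (hj : Function.Injective j)
    (S : ℝ → X →L[ℝ] Y₀) (S' : ℝ → X →L[ℝ] Y)
    (R : ℝ → Y →L[ℝ] Z) (R' : ℝ → Y₀ →L[ℝ] Z)
    (hScont : ∀ x : X, ContinuousOn (fun t => S t x) (Icc a b))
    (hSderiv : ∀ x : X, ∀ t ∈ Icc a b,
      HasDerivWithinAt (fun u => j (S u x)) (S' t x) (Icc a b) t)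
    (hS'cont : ∀ x : X, ContinuousOn (fun t => S' t x) (Icc a b))
    (hRcont : ∀ y : Y, ContinuousOn (fun t => R t y) (Icc a b))
    (hRderiv : ∀ y₀ : Y₀, ∀ t ∈ Icc a b,
      HasDerivWithinAt (fun u => R u (j y₀)) (R' t y₀) (Icc a b) t)
    (hR'cont : ∀ y₀ : Y₀, ContinuousOn (fun t => R' t y₀) (Icc a b)) :
    ∀ x : X, (∀ t ∈ Icc a b,
      HasDerivWithinAt (fun u => R u (j (S u x)))
        (R' t (S t x) + R t (S' t x)) (Icc a b) t) ∧
      ContinuousOn (fun t => R' t (S t x) + R t (S' t x)) (Icc a b) := by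
  intro x
  constructor
  · intro t ht
    have hS := hSderiv x t ht
    have hR := hRderiv (S t x) t ht
    rw [hasDerivWithinAt_iff_tendsto_slope] at hS hR ⊢
    have h1 := hR.add (strong_tendsto hRcont ht diff_subset hS)
    refine h1.congr fun u => ?_
    simp only [slope_def_module, map_smul, map_sub, ← smul_add]
    congr 1
    abel
  · intro t ht
    exact (strong_tendsto hR'cont ht subset_rfl (hScont x t ht)).add
      (strong_tendsto hRcont ht subset_rfl (hS'cont x t ht))
end

section
/- Let X and Y be Banach spaces, J a compact interval, and S : J → B(X,Y) strongly continuously differentiable with strong derivative S'. If S(t) is invertible (a continuous linear isomorphism from X onto Y) for every t ∈ J, then the family t ↦ S(t)^{-1} is strongly continuously differentiable in B(Y,X), with strong derivative −S(t)^{-1} S'(t) S(t)^{-1}. -/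
open Set

/-- Let `X` and `Y` be Banach spaces, `J = [a,b]` a compact interval, and
`S : J → B(X,Y)` strongly continuously differentiable with strong derivative `S'`. If `S(t)`
is invertible (with inverse `T(t) ∈ B(Y,X)`) for every `t ∈ J`, then the family
`t ↦ S(t)⁻¹ = T(t)` is strongly continuously differentiable in `B(Y,X)`, with strong
derivative `−S(t)⁻¹ S'(t) S(t)⁻¹`. -/
theorem statement6
    {X Y : Type*}
    [NormedAddCommGroup X] [NormedSpace ℝ X] [CompleteSpace X]
    [NormedAddCommGroup Y] [NormedSpace ℝ Y] [CompleteSpace Y]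
    (a b : ℝ) (hab : a ≤ b)
    (S S' : ℝ → X →L[ℝ] Y)
    (hSderiv : ∀ x : X, ∀ t ∈ Icc a b,
      HasDerivWithinAt (fun u => S u x) (S' t x) (Icc a b) t)
    (hS'cont : ∀ x : X, ContinuousOn (fun t => S' t x) (Icc a b))
    (T : ℝ → Y →L[ℝ] X)
    (hT₁ : ∀ t ∈ Icc a b, (S t).comp (T t) = ContinuousLinearMap.id ℝ Y)
    (hT₂ : ∀ t ∈ Icc a b, (T t).comp (S t) = ContinuousLinearMap.id ℝ X) :
    ∀ y : Y, (∀ t ∈ Icc a b,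
      HasDerivWithinAt (fun u => T u y) (-(T t (S' t (T t y)))) (Icc a b) t) ∧
      ContinuousOn (fun t => -(T t (S' t (T t y)))) (Icc a b) := by
  -- uniform bound on the derivative
  obtain ⟨M, hM⟩ : ∃ M, ∀ t : Icc a b, ‖S' t‖ ≤ M := by
    apply banach_steinhaus
    intro x
    obtain ⟨C, hC⟩ := isCompact_Icc.exists_bound_of_continuousOn (hS'cont x)
    exact ⟨C, fun t => hC t t.2⟩
  have hM0 : 0 ≤ M := (norm_nonneg _).trans (hM ⟨a, left_mem_Icc.2 hab⟩)
  -- norm Lipschitz continuity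
  have hLip : ∀ t ∈ Icc a b, ∀ u ∈ Icc a b, ‖S u - S t‖ ≤ M * ‖u - t‖ := by
    intro t ht u hu
    refine ContinuousLinearMap.opNorm_le_bound _ (by positivity) fun x => ?_
    have := Convex.norm_image_sub_le_of_norm_hasDerivWithin_le (f := fun u => S u x)
      (C := M * ‖x‖) (fun v hv => hSderiv x v hv)
      (fun v hv => (S' v).le_of_opNorm_le (hM ⟨v, hv⟩) x) (convex_Icc a b) ht hu
    simpa [mul_right_comm] using this
  have hScont : ContinuousOn S (Icc a b) := by
    refine LipschitzOnWith.continuousOn (K := ⟨M, hM0⟩) ?_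
    refine LipschitzOnWith.of_dist_le_mul fun u hu t ht => ?_
    rw [dist_eq_norm, dist_eq_norm]
    exact hLip t ht u hu
  have hTcont : ContinuousOn T (Icc a b) := by
    have hinv : ∀ t (ht : t ∈ Icc a b), ∃ e : X ≃L[ℝ] Y, (e : X →L[ℝ] Y) = S t ∧
        (e.symm : Y →L[ℝ] X) = T t := fun t ht =>
      ⟨ContinuousLinearEquiv.equivOfInverse (S t) (T t)
        (fun x => DFunLike.congr_fun (hT₂ t ht) x) (fun y => DFunLike.congr_fun (hT₁ t ht) y),
        by ext; rfl, by ext; rfl⟩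
    have h1 : ContinuousOn (fun t => ContinuousLinearMap.inverse (S t)) (Icc a b) := by
      intro t ht
      obtain ⟨e, he, -⟩ := hinv t ht
      have h := (contDiffAt_map_inverse (𝕜 := ℝ) (n := 0) e).continuousAt
      rw [he] at h
      exact ContinuousAt.comp_continuousWithinAt (f := S) h (hScont t ht)
    refine h1.congr fun t ht => ?_
    obtain ⟨e, he, he'⟩ := hinv t ht
    simp only [← he, ← he', ContinuousLinearMap.inverse_equiv]
  intro y
  have hTy : ContinuousOn (fun t => T t y) (Icc a b) := hTcont.clm_apply continuousOn_const
  refine ⟨fun t ht => ?_, ?_⟩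
  · have hs := hSderiv (T t y) t ht
    rw [hasDerivWithinAt_iff_tendsto_slope] at hs ⊢
    have hT' : Filter.Tendsto T (nhdsWithin t (Icc a b \ {t})) (nhds (T t)) :=
      (hTcont t ht).mono_left (nhdsWithin_mono _ sdiff_subset)
    have hcomb := ((isBoundedBilinearMap_apply (𝕜 := ℝ) (E := Y) (F := X)).continuous.tendsto
      (T t, S' t (T t y))).comp (hT'.prodMk_nhds hs)
    refine hcomb.neg.congr' ?_
    filter_upwards [self_mem_nhdsWithin] with u hu
    have e1 : T u (S u (T t y)) = T t y := DFunLike.congr_fun (hT₂ u hu.1) _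
    have e2 : S t (T t y) = y := DFunLike.congr_fun (hT₁ t ht) _
    simp only [Function.comp_apply, slope_def_module, map_smul, map_sub, e1, e2]
    rw [← smul_neg, neg_sub]
  · refine (hTcont.clm_apply ?_).neg
    intro t ht
    have h1 : Filter.Tendsto (fun u => S' u (T u y - T t y)) (nhdsWithin t (Icc a b))
        (nhds 0) := by
      have h2 : Filter.Tendsto (fun u => M * ‖T u y - T t y‖) (nhdsWithin t (Icc a b))
          (nhds 0) := by
        have := (((hTy t ht).sub_const (T t y)).norm).const_mul M
        simpa using this
      refine squeeze_zero_norm' ?_ h2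
      filter_upwards [self_mem_nhdsWithin] with u hu
      exact (S' u).le_of_opNorm_le (hM ⟨u, hu⟩) _
    have h3 := h1.add (hS'cont (T t y) t ht)
    simpa [ContinuousWithinAt] using h3
end

section
/- Let X and Y be Banach spaces, J a compact interval, X₀ ⊆ X a dense subspace, and Y₀ a Banach space equipped with a continuous linear injection j : Y₀ → Y. Let S : J → B(X,Y₀) be a family of bounded operators and suppose there is a strongly continuous family S' : J → B(X,Y₀) such that for every x ∈ X₀ the map t ↦ j(S(t)x) is differentiable in Y with derivative j(S'(t)x). Then for every x ∈ X the map t ↦ S(t)x is differentiable in Y₀ with derivative S'(t)x. -/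
open Set

/-- Let `X` and `Y` be Banach spaces, `J = [a,b]` a compact interval,
`X₀ ⊆ X` a dense subspace, and `Y₀` a Banach space with a continuous linear injection
`j : Y₀ → Y`. Let `S : J → B(X,Y₀)` be a family of bounded operators and suppose there is a
strongly continuous family `S' : J → B(X,Y₀)` such that for every `x ∈ X₀` the map
`t ↦ j(S(t)x)` is differentiable in `Y` with derivative `j(S'(t)x)`. Then for every `x ∈ X`
the map `t ↦ S(t)x` is differentiable in `Y₀` with derivative `S'(t)x`. -/
theorem statement7
    {X Y Y₀ : Type*}
    [NormedAddCommGroup X] [NormedSpace ℝ X] [CompleteSpace X]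
    [NormedAddCommGroup Y] [NormedSpace ℝ Y] [CompleteSpace Y]
    [NormedAddCommGroup Y₀] [NormedSpace ℝ Y₀] [CompleteSpace Y₀]
    (a b : ℝ) (hab : a ≤ b)
    (X₀ : Submodule ℝ X) (hX₀ : Dense (X₀ : Set X))
    (j : Y₀ →L[ℝ] Y) (hj : Function.Injective j)
    (S S' : ℝ → X →L[ℝ] Y₀)
    (hS'cont : ∀ x : X, ContinuousOn (fun t => S' t x) (Icc a b))
    (hSderiv : ∀ x ∈ X₀, ∀ t ∈ Icc a b,
      HasDerivWithinAt (fun u => j (S u x)) (j (S' t x)) (Icc a b) t) :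
    ∀ x : X, ∀ t ∈ Icc a b,
      HasDerivWithinAt (fun u => S u x) (S' t x) (Icc a b) t := by
  classical
  have hGcont : ∀ x : X, Continuous (fun t : ℝ => S' (projIcc a b hab t) x) := by
    intro x
    have h := (hS'cont x).comp_continuous (f := fun t : ℝ => (projIcc a b hab t : ℝ))
      (continuous_subtype_val.comp continuous_projIcc) (fun t => (projIcc a b hab t).2)
    exact h
  obtain ⟨M, hM⟩ : ∃ M, ∀ t : Icc a b, ‖S' t‖ ≤ M := by
    apply banach_steinhaus
    intro x
    obtain ⟨C, hC⟩ := isCompact_Icc.exists_bound_of_continuousOn (hS'cont x)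
    exact ⟨C, fun t => hC t t.2⟩
  have hM0 : 0 ≤ M := (norm_nonneg _).trans (hM ⟨a, left_mem_Icc.2 hab⟩)
  have hI : ∀ (x : X) (t : ℝ), HasDerivAt
      (fun u => ∫ r in a..u, S' (projIcc a b hab r) x) (S' (projIcc a b hab t) x) t := by
    intro x t
    exact (hGcont x).integral_hasStrictDerivAt a t |>.hasDerivAt
  have hcontx : ∀ t : ℝ, Continuous (fun x => ∫ r in a..t, S' (projIcc a b hab r) x) := by
    intro t
    refine LipschitzWith.continuous (K := Real.toNNReal (M * |t - a|))
      (LipschitzWith.of_dist_le_mul fun x y => ?_)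
    rw [dist_eq_norm, dist_eq_norm, Real.coe_toNNReal _ (by positivity),
      ← intervalIntegral.integral_sub ((hGcont x).intervalIntegrable _ _)
        ((hGcont y).intervalIntegrable _ _)]
    calc _ ≤ (M * ‖x - y‖) * |t - a| := by
          apply intervalIntegral.norm_integral_le_of_norm_le_const
          intro r _
          rw [← map_sub]
          exact (S' _).le_of_opNorm_le (hM _) _
      _ = _ := by ring
  have key0 : ∀ x ∈ X₀, ∀ t ∈ Icc a b,
      S t x = S a x + ∫ r in a..t, S' (projIcc a b hab r) x := by
    intro x hx t ht
    have hd : ∀ u ∈ Icc a b, HasDerivWithinAt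
        (fun u => j (S u x) - j (∫ r in a..u, S' (projIcc a b hab r) x)) 0 (Icc a b) u := by
      intro u hu
      have h1 := (j.hasFDerivAt.comp_hasDerivAt u (hI x u)).hasDerivWithinAt (s := Icc a b)
      have h2 := (hSderiv x hx u hu).sub h1
      rw [projIcc_of_mem hab hu] at h2
      rw [sub_self] at h2
      exact h2
    have hc := constant_of_derivWithin_zero (fun u hu => (hd u hu).differentiableWithinAt)
      (fun u hu => (hd u (Ico_subset_Icc_self hu)).derivWithin
        (uniqueDiffOn_Icc (hu.1.trans_lt hu.2) u (Ico_subset_Icc_self hu))) t ht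
    simp only [intervalIntegral.integral_same, map_zero, sub_zero] at hc
    apply hj
    rw [map_add, ← hc]
    abel
  have key : ∀ x : X, ∀ t ∈ Icc a b,
      S t x = S a x + ∫ r in a..t, S' (projIcc a b hab r) x := by
    intro x t ht
    have := Continuous.ext_on hX₀ (S t).continuous ((S a).continuous.add (hcontx t))
      (fun y hy => key0 y hy t ht)
    exact congrFun this x
  intro x t ht
  have h := ((hI x t).const_add (S a x)).hasDerivWithinAt (s := Icc a b)
  rw [projIcc_of_mem hab ht] at h
  exact h.congr (fun u hu => key x u hu) (key x t ht)
end

section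
/- Let X and Y be complex Hilbert spaces, J a compact interval, and S : J → B(X,Y) strongly continuously differentiable with strong derivative S'. If S'(r) is a compact operator for every r ∈ J, then S(t) − S(s) is a compact operator for all s, t ∈ J. -/
open Set

open Filter Topology in
/-- A compact operator sends orthonormal sequences to null sequences. -/
theorem compact_tendsto_orthonormal
    {X Y : Type*}
    [NormedAddCommGroup X] [InnerProductSpace ℂ X] [CompleteSpace X]
    [NormedAddCommGroup Y] [InnerProductSpace ℂ Y] [CompleteSpace Y]
    (K : X →L[ℂ] Y) (hK : IsCompactOperator (⇑K)) (e : ℕ → X) (he : Orthonormal ℂ e) :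
    Tendsto (fun n => K (e n)) atTop (𝓝 0) := by
  refine tendsto_of_subseq_tendsto fun ns hns => ?_
  have hc : IsCompact (closure (Set.image K (Metric.closedBall 0 1))) :=
    hK.isCompact_closure_image_closedBall (f := (K : X →ₗ[ℂ] Y)) 1
  obtain ⟨y, -, φ, hφ, hy⟩ := hc.tendsto_subseq (x := fun n => K (e (ns n))) (fun n =>
    subset_closure ⟨e (ns n), by simp [he.1], rfl⟩)
  refine ⟨φ, ?_⟩
  have hy0 : y = 0 := by
    have h1 : Tendsto (fun n => inner ℂ (K (e (ns (φ n)))) y) atTop (𝓝 (inner ℂ y y)) :=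
      Filter.Tendsto.inner hy tendsto_const_nhds
    have h2 : Tendsto (fun n => inner ℂ (e n) (K.adjoint y)) atTop (𝓝 0) := by
      have := (he.inner_products_summable (K.adjoint y)).tendsto_atTop_zero
      rw [tendsto_zero_iff_norm_tendsto_zero]
      have h3 := this.sqrt
      simpa using h3
    have h4 := h2.comp (hns.comp hφ.tendsto_atTop)
    have h5 : (fun n => inner ℂ (K (e (ns (φ n)))) y)
        = (fun n => inner ℂ (e n) (K.adjoint y)) ∘ (ns ∘ φ) := by
      ext n
      simp [ContinuousLinearMap.adjoint_inner_right]
    rw [h5] at h1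
    exact inner_self_eq_zero.1 (tendsto_nhds_unique h1 h4)
  rw [← hy0]
  exact hy

/-- An operator sending orthonormal sequences to null sequences is compact. -/
theorem compact_of_orthonormal
    {X Y : Type*}
    [NormedAddCommGroup X] [InnerProductSpace ℂ X] [CompleteSpace X]
    [NormedAddCommGroup Y] [InnerProductSpace ℂ Y] [CompleteSpace Y]
    (T : X →L[ℂ] Y)
    (h : ∀ e : ℕ → X, Orthonormal ℂ e →
      Filter.Tendsto (fun n => T (e n)) Filter.atTop (nhds 0)) :
    IsCompactOperator (⇑T) := by
  have hcl := isClosed_setOfPred_isCompactOperator (M₁ := X) (M₂ := Y) (σ₁₂ := RingHom.id ℂ)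
  suffices hT : T ∈ closure {f : X →L[ℂ] Y | IsCompactOperator (⇑f)} by
    rw [IsClosed.closure_eq hcl] at hT
    exact hT
  rw [Metric.mem_closure_iff]
  intro ε hε
  by_contra! hcon
  obtain ⟨e, he, ho⟩ := exists_seq_of_forall_finset_exists
    (fun x : X => ‖x‖ = 1 ∧ ε / 2 ≤ ‖T x‖) (fun x y => inner ℂ x y = 0) (by
      intro s _
      by_contra! hno
      let V : Submodule ℂ X := Submodule.span ℂ (s : Set X)
      have : FiniteDimensional ℂ V := FiniteDimensional.span_finset ℂ s
      have hcomp : IsCompactOperator (⇑((T.comp V.subtypeL).comp V.orthogonalProjectionOnto)) := by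
        have : ProperSpace V := FiniteDimensional.proper ℂ V
        exact (isCompactOperator_of_locallyCompactSpace_rng
          (T.comp V.subtypeL)).comp_clm V.orthogonalProjectionOnto
      have hlt := hcon _ hcomp
      have hV : ∀ y ∈ Vᗮ, ‖T y‖ ≤ ε / 2 * ‖y‖ := by
        intro y hy
        by_cases hy0 : y = 0
        · simp [hy0]
        by_contra! hbig
        have hn : 0 < ‖y‖ := norm_pos_iff.2 hy0
        obtain ⟨x, hx, hxy⟩ := hno (((‖y‖⁻¹ : ℝ) : ℂ) • y) ⟨by
          rw [norm_smul]; simp [hn.ne'], by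
          rw [map_smul, norm_smul]
          simp only [Complex.norm_real, norm_inv, norm_norm]
          rw [inv_mul_eq_div, le_div_iff₀ hn]
          exact hbig.le⟩
        apply hxy
        rw [inner_smul_right, (Submodule.mem_orthogonal V y).1 hy x (Submodule.subset_span hx),
          mul_zero]
      have hle : ‖T - (T.comp V.subtypeL).comp V.orthogonalProjectionOnto‖ ≤ ε / 2 := by
        refine ContinuousLinearMap.opNorm_le_bound _ (by positivity) fun x => ?_
        have hx := hV _ (V.sub_starProjection_mem_orthogonal x)
        have hx2 : ‖x - V.starProjection x‖ ≤ ‖x‖ := by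
          rw [← V.starProjection_orthogonal_val]
          exact Submodule.norm_starProjection_apply_le _ _
        have heq : (T - (T.comp V.subtypeL).comp V.orthogonalProjectionOnto) x
            = T (x - V.starProjection x) := by
          rw [map_sub]; rfl
        rw [heq]
        exact hx.trans (by gcongr)
      rw [dist_eq_norm] at hlt
      linarith)
  have hort : Orthonormal ℂ e := by
    refine ⟨fun n => (he n).1, fun m n hmn => ?_⟩
    rcases lt_or_gt_of_ne hmn with hlt | hlt
    · exact ho m n hlt
    · exact inner_eq_zero_symm.1 (ho n m hlt)
  have hlim := (h e hort).norm
  rw [norm_zero] at hlim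
  have := ge_of_tendsto' hlim (fun n => (he n).2)
  linarith

/-- Let `X` and `Y` be complex Hilbert spaces, `J = [a,b]` a compact
interval, and `S : J → B(X,Y)` strongly continuously differentiable with strong derivative
`S'`. If `S'(r)` is a compact operator for every `r ∈ J`, then `S(t) − S(s)` is a compact
operator for all `s, t ∈ J`. -/
theorem statement8
    {X Y : Type*}
    [NormedAddCommGroup X] [InnerProductSpace ℂ X] [CompleteSpace X]
    [NormedAddCommGroup Y] [InnerProductSpace ℂ Y] [CompleteSpace Y]
    (a b : ℝ) (hab : a ≤ b)
    (S S' : ℝ → X →L[ℂ] Y)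
    (hSderiv : ∀ x : X, ∀ t ∈ Icc a b,
      HasDerivWithinAt (fun u => S u x) (S' t x) (Icc a b) t)
    (hS'cont : ∀ x : X, ContinuousOn (fun t => S' t x) (Icc a b))
    (hS'compact : ∀ r ∈ Icc a b, IsCompactOperator (⇑(S' r))) :
    ∀ s ∈ Icc a b, ∀ t ∈ Icc a b, IsCompactOperator (⇑(S t - S s)) := by
  have key : ∀ s ∈ Icc a b, ∀ t ∈ Icc a b, s ≤ t → IsCompactOperator (⇑(S t - S s)) := by
    intro s hs t ht hst
    have hsub : Icc s t ⊆ Icc a b := Icc_subset_Icc hs.1 ht.2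
    obtain ⟨C, hC⟩ : ∃ C, ∀ r : Icc a b, ‖S' r‖ ≤ C := by
      apply banach_steinhaus
      intro x
      obtain ⟨C, hC⟩ := isCompact_Icc.exists_bound_of_continuousOn (hS'cont x)
      exact ⟨C, fun r => hC r r.2⟩
    have hint : ∀ x, IntervalIntegrable (fun r => S' r x) MeasureTheory.volume s t := fun x =>
      ((hS'cont x).mono hsub).intervalIntegrable_of_Icc hst
    have hftc : ∀ x, ∫ r in s..t, S' r x = (S t - S s) x := by
      intro x
      refine intervalIntegral.integral_eq_sub_of_hasDerivAt_of_le hst (f := fun u => S u x)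
        (fun u hu => ((hSderiv x u (hsub hu)).continuousWithinAt).mono hsub) ?_ (hint x)
      intro u hu
      exact (hSderiv x u (hsub (Ioo_subset_Icc_self hu))).hasDerivAt
        (Icc_mem_nhds (hs.1.trans_lt hu.1) (hu.2.trans_le ht.2))
    apply compact_of_orthonormal
    intro e he
    simp_rw [← hftc]
    have hmem : ∀ r ∈ Set.uIoc s t, r ∈ Icc a b := fun r hr => by
      rw [uIoc_of_le hst] at hr
      exact hsub (Ioc_subset_Icc_self hr)
    have := intervalIntegral.tendsto_integral_filter_of_dominated_convergence
      (μ := MeasureTheory.volume) (a := s) (b := t) (l := Filter.atTop)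
      (F := fun (n : ℕ) r => S' r (e n)) (f := fun _ => (0 : Y)) (fun _ => C)
      (Filter.Eventually.of_forall fun n => (hint (e n)).def'.aestronglyMeasurable)
      (Filter.Eventually.of_forall fun n => Filter.Eventually.of_forall fun r hr => by
        have h1 := (S' r).le_opNorm (e n)
        rw [he.1 n, mul_one] at h1
        exact h1.trans (hC ⟨r, hmem r hr⟩))
      (by simp)
      (Filter.Eventually.of_forall fun r hr =>
        compact_tendsto_orthonormal (S' r) (hS'compact r (hmem r hr)) e he)
    simpa using this
  intro s hs t ht
  rcases le_total s t with h | h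
  · exact key s hs t ht h
  · have := (key t ht s hs h).neg
    have heq : (⇑(S t - S s) : X → Y) = -⇑(S s - S t) := by
      ext x
      simp
    rw [heq]
    exact this
end

section
/- Let H be a complex Hilbert space, T > 0, and let E, F : [0,T] × [0,T] → B(H) be strongly continuous families of bounded operators (i.e., (t,s) ↦ E(t,s)x and (t,s) ↦ F(t,s)x are continuous for every x ∈ H). Then there exists a unique strongly continuous family V : [0,T] × [0,T] → B(H) such that for all x ∈ H and all s, t ∈ [0,T], V(t,s)x = E(t,s)x + ∫_s^t V(t,r)F(r,s)x dr (Bochner integral). -/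
open Set intervalIntegral

section aux13

variable {H : Type*} [NormedAddCommGroup H] [InnerProductSpace ℂ H] [CompleteSpace H]

/-- Applying a strongly continuous, locally bounded family to a continuous vector. -/
theorem aux_apply {X : Type*} [TopologicalSpace X] (A : X → H →L[ℂ] H) (f : X → H) (g : X → ℝ)
    (hA : ∀ x, Continuous fun p => A p x) (hf : Continuous f) (hg : Continuous g)
    (hb : ∀ p, ‖A p‖ ≤ g p) : Continuous fun p => A p (f p) := by
  rw [continuous_iff_continuousAt]
  intro p₀
  have h1 : Filter.Tendsto (fun p => A p (f p - f p₀)) (nhds p₀) (nhds 0) := by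
    apply squeeze_zero_norm (a := fun p => g p * ‖f p - f p₀‖)
    · intro p
      exact (A p).le_of_opNorm_le (hb p) _
    · have : Continuous fun p => g p * ‖f p - f p₀‖ := by fun_prop
      simpa using this.tendsto p₀
  have h2 := h1.add ((hA (f p₀)).tendsto p₀)
  simp only [zero_add] at h2
  refine h2.congr fun p => ?_
  rw [map_sub]; abel

/-- Clamping a strongly continuous family on the square. -/
theorem aux_clamp (T : ℝ) (hT : 0 < T) (E : ℝ → ℝ → H →L[ℂ] H)
    (hE : ∀ x : H, ContinuousOn (fun p : ℝ × ℝ => E p.1 p.2 x) (Icc 0 T ×ˢ Icc 0 T)) :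
    ∃ E' : ℝ → ℝ → H →L[ℂ] H, (∀ x, Continuous fun p : ℝ × ℝ => E' p.1 p.2 x) ∧
      (∃ M : ℝ, 0 ≤ M ∧ ∀ t s, ‖E' t s‖ ≤ M) ∧
      ∀ t ∈ Icc (0:ℝ) T, ∀ s ∈ Icc (0:ℝ) T, E' t s = E t s := by
  have hc : Continuous fun t : ℝ => (projIcc 0 T hT.le t : ℝ) :=
    continuous_subtype_val.comp continuous_projIcc
  refine ⟨fun t s => E (projIcc 0 T hT.le t) (projIcc 0 T hT.le s), ?_, ?_, ?_⟩
  · intro x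
    exact (hE x).comp_continuous
      (f := fun p : ℝ × ℝ => ((projIcc 0 T hT.le p.1 : ℝ), (projIcc 0 T hT.le p.2 : ℝ)))
      (by fun_prop) (fun p => ⟨Subtype.prop _, Subtype.prop _⟩)
  · have hb := banach_steinhaus (g := fun p : (Icc 0 T ×ˢ Icc 0 T : Set (ℝ × ℝ)) => E p.1.1 p.1.2)
      (by
        intro x
        obtain ⟨C, hC⟩ := (isCompact_Icc.prod isCompact_Icc).exists_bound_of_continuousOn (hE x)
        exact ⟨C, fun p => hC p.1 p.2⟩)
    obtain ⟨C, hC⟩ := hb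
    refine ⟨max C 0, le_max_right _ _, fun t s => le_max_of_le_left ?_⟩
    exact hC ⟨((projIcc 0 T hT.le t : ℝ), (projIcc 0 T hT.le s : ℝ)),
      ⟨Subtype.prop _, Subtype.prop _⟩⟩
  · intro t ht s hs
    simp only [projIcc_of_mem hT.le ht, projIcc_of_mem hT.le hs]

/-- The basic Volterra estimate. -/
theorem aux_bound (W F : ℝ → ℝ → H →L[ℂ] H) (C K : ℝ) (hC : 0 ≤ C) (n : ℕ) (s t : ℝ)
    (hW : ∀ r ∈ uIcc s t, ‖W t r‖ ≤ C * |t - r| ^ n) (hF : ∀ r ∈ uIcc s t, ‖F r s‖ ≤ K) (x : H) :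
    ‖∫ r in s..t, W t r (F r s x)‖ ≤ C * K / (n + 1) * |t - s| ^ (n + 1) * ‖x‖ := by
  have hcont : Continuous fun r : ℝ => C * K * ‖x‖ * |r - t| ^ n := by fun_prop
  rw [intervalIntegral.norm_intervalIntegral_eq]
  calc ‖∫ r in uIoc s t, W t r (F r s x)‖
      ≤ ∫ r in uIoc s t, C * K * ‖x‖ * |r - t| ^ n := by
        apply MeasureTheory.norm_integral_le_of_norm_le
        · exact (hcont.intervalIntegrable s t).def'
        · refine (MeasureTheory.ae_restrict_iff' measurableSet_uIoc).2 (Filter.Eventually.of_forall ?_)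
          intro r hr
          have hr' := uIoc_subset_uIcc hr
          have h1 : ‖F r s x‖ ≤ K * ‖x‖ := (F r s).le_of_opNorm_le (hF r hr') x
          calc ‖W t r (F r s x)‖ ≤ C * |t - r| ^ n * ‖F r s x‖ :=
                (W t r).le_of_opNorm_le (hW r hr') _
            _ ≤ C * |t - r| ^ n * (K * ‖x‖) := by gcongr
            _ = _ := by rw [abs_sub_comm t r]; ring
    _ = _ := by
        rw [MeasureTheory.integral_const_mul, uIoc_comm, integral_pow_abs_sub_uIoc, abs_sub_comm s t]
        ring

/-- Hypotheses on the iterates. -/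
def auxGood (M K : ℝ) (n : ℕ) (W : ℝ → ℝ → H →L[ℂ] H) : Prop :=
  (∀ x, Continuous fun p : ℝ × ℝ => W p.1 p.2 x) ∧
    ∀ t s, ‖W t s‖ ≤ M * K ^ n / n.factorial * |t - s| ^ n

theorem aux_cont3 (W F : ℝ → ℝ → H →L[ℂ] H) (C : ℝ) (n : ℕ)
    (hWc : ∀ x, Continuous fun p : ℝ × ℝ => W p.1 p.2 x)
    (hFc : ∀ x, Continuous fun p : ℝ × ℝ => F p.1 p.2 x)
    (hW : ∀ t s, ‖W t s‖ ≤ C * |t - s| ^ n) (x : H) :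
    Continuous fun q : (ℝ × ℝ) × ℝ => W q.1.1 q.2 (F q.2 q.1.2 x) := by
  apply aux_apply (fun q : (ℝ × ℝ) × ℝ => W q.1.1 q.2) (fun q => F q.2 q.1.2 x)
    (fun q => C * |q.1.1 - q.2| ^ n)
  · intro y
    exact (hWc y).comp (f := fun q : (ℝ × ℝ) × ℝ => (q.1.1, q.2)) (by fun_prop)
  · exact (hFc x).comp (f := fun q : (ℝ × ℝ) × ℝ => (q.2, q.1.2)) (by fun_prop)
  · fun_prop
  · intro q; exact hW _ _

theorem aux_fact (M K : ℝ) (n : ℕ) : M * K ^ n / n.factorial * K / (n + 1)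
    = M * K ^ (n + 1) / (n + 1).factorial := by
  have : (n.factorial : ℝ) ≠ 0 := by positivity
  rw [Nat.factorial_succ]; push_cast; field_simp; ring

theorem aux_step (F : ℝ → ℝ → H →L[ℂ] H) (M K : ℝ) (hM : 0 ≤ M) (hK : 0 ≤ K)
    (hFc : ∀ x, Continuous fun p : ℝ × ℝ => F p.1 p.2 x) (hF : ∀ t s, ‖F t s‖ ≤ K)
    (n : ℕ) (W : ℝ → ℝ → H →L[ℂ] H) (hW : auxGood M K n W) :
    ∃ W' : ℝ → ℝ → H →L[ℂ] H, auxGood M K (n + 1) W' ∧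
      ∀ t s x, W' t s x = ∫ r in s..t, W t r (F r s x) := by
  have h3 := aux_cont3 W F _ n hW.1 hFc hW.2
  have hint : ∀ x t s a b, IntervalIntegrable (fun r => W t r (F r s x)) MeasureTheory.volume a b := by
    intro x t s a b
    exact Continuous.intervalIntegrable
      ((h3 x).comp (f := fun r : ℝ => ((t, s), r)) (by fun_prop)) _ _
  have hbd : ∀ t s x, ‖∫ r in s..t, W t r (F r s x)‖
      ≤ M * K ^ (n + 1) / (n + 1).factorial * |t - s| ^ (n + 1) * ‖x‖ := by
    intro t s x
    have := aux_bound W F (M * K ^ n / n.factorial) K (by positivity) n s t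
      (fun r _ => hW.2 t r) (fun r _ => hF r s) x
    rwa [aux_fact] at this
  let L : ℝ → ℝ → H →ₗ[ℂ] H := fun t s =>
    { toFun := fun x => ∫ r in s..t, W t r (F r s x)
      map_add' := by
        intro x y
        simp only [map_add]
        exact intervalIntegral.integral_add (hint x t s s t) (hint y t s s t)
      map_smul' := by
        intro c x
        simp only [map_smul, RingHom.id_apply]
        exact intervalIntegral.integral_smul c _ }
  refine ⟨fun t s => (L t s).mkContinuous _ (hbd t s), ⟨?_, ?_⟩, fun t s x => rfl⟩
  · intro x
    have e : (fun p : ℝ × ℝ => (L p.1 p.2).mkContinuous _ (hbd p.1 p.2) x) =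
        fun p : ℝ × ℝ => (∫ r in (0:ℝ)..p.1, W p.1 r (F r p.2 x)) -
          ∫ r in (0:ℝ)..p.2, W p.1 r (F r p.2 x) := by
      funext p
      rw [intervalIntegral.integral_interval_sub_left (hint _ _ _ _ _) (hint _ _ _ _ _)]
      rfl
    rw [e]
    exact (intervalIntegral.continuous_parametric_intervalIntegral_of_continuous
        (f := fun (p : ℝ × ℝ) r => W p.1 r (F r p.2 x)) (h3 x) continuous_fst).sub
      (intervalIntegral.continuous_parametric_intervalIntegral_of_continuous
        (f := fun (p : ℝ × ℝ) r => W p.1 r (F r p.2 x)) (h3 x) continuous_snd)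
  · intro t s
    exact LinearMap.mkContinuous_norm_le _ (by positivity) _

theorem aux_seq (E F : ℝ → ℝ → H →L[ℂ] H) (M K : ℝ) (hM : 0 ≤ M) (hK : 0 ≤ K)
    (hEc : ∀ x, Continuous fun p : ℝ × ℝ => E p.1 p.2 x) (hE : ∀ t s, ‖E t s‖ ≤ M)
    (hFc : ∀ x, Continuous fun p : ℝ × ℝ => F p.1 p.2 x) (hF : ∀ t s, ‖F t s‖ ≤ K) :
    ∃ W : ℕ → ℝ → ℝ → H →L[ℂ] H, W 0 = E ∧ (∀ n, auxGood M K n (W n)) ∧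
      ∀ n t s x, W (n + 1) t s x = ∫ r in s..t, W n t r (F r s x) := by
  choose S hS1 hS2 using aux_step F M K hM hK hFc hF
  let f : (n : ℕ) → {W : ℝ → ℝ → H →L[ℂ] H // auxGood M K n W} := fun n =>
    Nat.rec ⟨E, hEc, by simpa using hE⟩ (fun n w => ⟨S n w.1 w.2, hS1 n w.1 w.2⟩) n
  exact ⟨fun n => (f n).1, rfl, fun n => (f n).2, fun n t s x => hS2 n (f n).1 (f n).2 t s x⟩

theorem aux_exists (T : ℝ) (E F : ℝ → ℝ → H →L[ℂ] H) (M K : ℝ) (hM : 0 ≤ M) (hK : 0 ≤ K)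
    (hEc : ∀ x, Continuous fun p : ℝ × ℝ => E p.1 p.2 x) (hE : ∀ t s, ‖E t s‖ ≤ M)
    (hFc : ∀ x, Continuous fun p : ℝ × ℝ => F p.1 p.2 x) (hF : ∀ t s, ‖F t s‖ ≤ K) :
    ∃ V : ℝ → ℝ → H →L[ℂ] H,
      (∀ x : H, ContinuousOn (fun p : ℝ × ℝ => V p.1 p.2 x) (Icc 0 T ×ˢ Icc 0 T)) ∧
        ∀ x : H, ∀ s ∈ Icc (0 : ℝ) T, ∀ t ∈ Icc (0 : ℝ) T,
          V t s x = E t s x + ∫ r in s..t, V t r (F r s x) := by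
  obtain ⟨W, hW0, hWg, hWs⟩ := aux_seq E F M K hM hK hEc hE hFc hF
  let u : ℕ → ℝ := fun n => M * ((K * T) ^ n / n.factorial)
  have hu : Summable u := (Real.summable_pow_div_factorial (K * T)).mul_left M
  have hWu : ∀ n, ∀ t ∈ Icc (0 : ℝ) T, ∀ s ∈ Icc (0 : ℝ) T, ‖W n t s‖ ≤ u n := by
    intro n t ht s hs
    refine ((hWg n).2 t s).trans ?_
    have h1 : |t - s| ≤ T := abs_le.2 ⟨by linarith [ht.1, hs.2], by linarith [ht.2, hs.1]⟩
    calc M * K ^ n / n.factorial * |t - s| ^ n ≤ M * K ^ n / n.factorial * T ^ n := by gcongr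
      _ = u n := by simp only [u, mul_pow]; ring
  have hsum : ∀ t ∈ Icc (0 : ℝ) T, ∀ s ∈ Icc (0 : ℝ) T, ∀ x,
      HasSum (fun n => W n t s x) ((∑' n, W n t s) x) := by
    intro t ht s hs x
    have : Summable fun n => W n t s := Summable.of_norm_bounded hu fun n => hWu n t ht s hs
    exact this.hasSum.mapL (ContinuousLinearMap.apply ℂ H x)
  refine ⟨fun t s => ∑' n, W n t s, ?_, ?_⟩
  · intro x
    have hc : ContinuousOn (fun p : ℝ × ℝ => ∑' n, W n p.1 p.2 x) (Icc 0 T ×ˢ Icc 0 T) := by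
      apply continuousOn_tsum (u := fun n => u n * ‖x‖)
      · intro n; exact ((hWg n).1 x).continuousOn
      · exact hu.mul_right _
      · intro n p hp
        exact (W n p.1 p.2).le_of_opNorm_le (hWu n _ hp.1 _ hp.2) x
    refine hc.congr fun p hp => ?_
    exact (hsum p.1 hp.1 p.2 hp.2 x).tsum_eq.symm
  · intro x s hs t ht
    have hsub : ∀ r ∈ uIoc s t, r ∈ Icc (0:ℝ) T := fun r hr =>
      uIcc_subset_Icc hs ht (uIoc_subset_uIcc hr)
    have hI : HasSum (fun n => ∫ r in s..t, W n t r (F r s x))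
        (∫ r in s..t, (∑' n, W n t r) (F r s x)) := by
      apply intervalIntegral.hasSum_integral_of_dominated_convergence
        (fun n _ => u n * (K * ‖x‖))
      · intro n
        have := (aux_cont3 (W n) F _ n (hWg n).1 hFc (hWg n).2 x).comp
          (f := fun r : ℝ => ((t, s), r)) (by fun_prop)
        exact this.aestronglyMeasurable
      · intro n
        refine Filter.Eventually.of_forall fun r hr => ?_
        have h1 : ‖F r s x‖ ≤ K * ‖x‖ := (F r s).le_of_opNorm_le (hF r s) x
        have h2 := hWu n t ht r (hsub r hr)
        exact ((W n t r).le_of_opNorm_le h2 _).trans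
          (mul_le_mul_of_nonneg_left h1 ((norm_nonneg _).trans h2))
      · exact Filter.Eventually.of_forall fun r _ => hu.mul_right _
      · exact intervalIntegrable_const
      · exact Filter.Eventually.of_forall fun r hr => hsum t ht r (hsub r hr) _
    simp only [← hWs] at hI
    have h2 := hI.zero_add (f := fun n => W n t s x)
    rw [hW0] at h2
    exact (hsum t ht s hs x).unique h2

end aux13

/-- Let `H` be a complex Hilbert space, `T > 0`, and let
`E, F : [0,T] × [0,T] → B(H)` be strongly continuous families of bounded operators (i.e.
`(t,s) ↦ E(t,s)x` and `(t,s) ↦ F(t,s)x` are continuous for every `x ∈ H`). Then there exists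
a unique strongly continuous family `V : [0,T] × [0,T] → B(H)` such that for all `x ∈ H`
and all `s, t ∈ [0,T]`, `V(t,s)x = E(t,s)x + ∫_s^t V(t,r)F(r,s)x dr` (Bochner integral). -/
theorem statement13
    {H : Type*} [NormedAddCommGroup H] [InnerProductSpace ℂ H] [CompleteSpace H]
    (T : ℝ) (hT : 0 < T)
    (E F : ℝ → ℝ → H →L[ℂ] H)
    (hE : ∀ x : H, ContinuousOn (fun p : ℝ × ℝ => E p.1 p.2 x) (Icc 0 T ×ˢ Icc 0 T))
    (hF : ∀ x : H, ContinuousOn (fun p : ℝ × ℝ => F p.1 p.2 x) (Icc 0 T ×ˢ Icc 0 T)) :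
    ∃ V : ℝ → ℝ → H →L[ℂ] H,
      ((∀ x : H, ContinuousOn (fun p : ℝ × ℝ => V p.1 p.2 x) (Icc 0 T ×ˢ Icc 0 T)) ∧
        ∀ x : H, ∀ s ∈ Icc (0 : ℝ) T, ∀ t ∈ Icc (0 : ℝ) T,
          V t s x = E t s x + ∫ r in s..t, V t r (F r s x)) ∧
      ∀ V₂ : ℝ → ℝ → H →L[ℂ] H,
        ((∀ x : H, ContinuousOn (fun p : ℝ × ℝ => V₂ p.1 p.2 x) (Icc 0 T ×ˢ Icc 0 T)) ∧
          ∀ x : H, ∀ s ∈ Icc (0 : ℝ) T, ∀ t ∈ Icc (0 : ℝ) T,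
            V₂ t s x = E t s x + ∫ r in s..t, V₂ t r (F r s x)) →
        ∀ s ∈ Icc (0 : ℝ) T, ∀ t ∈ Icc (0 : ℝ) T, V₂ t s = V t s := by
  obtain ⟨E', hEc, ⟨M, hM, hEb⟩, hEE⟩ := aux_clamp T hT E hE
  obtain ⟨F', hFc, ⟨K, hK, hFb⟩, hFF⟩ := aux_clamp T hT F hF
  obtain ⟨V, hVc, hV⟩ := aux_exists T E' F' M K hM hK hEc hEb hFc hFb
  have hV' : ∀ x : H, ∀ s ∈ Icc (0 : ℝ) T, ∀ t ∈ Icc (0 : ℝ) T,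
          V t s x = E t s x + ∫ r in s..t, V t r (F r s x) := by
    intro x s hs t ht
    rw [hV x s hs t ht, hEE t ht s hs]
    congr 1
    apply intervalIntegral.integral_congr
    intro r hr
    simp only [hFF r (uIcc_subset_Icc hs ht hr) s hs]
  have hint : ∀ U : ℝ → ℝ → H →L[ℂ] H,
      (∀ x : H, ContinuousOn (fun p : ℝ × ℝ => U p.1 p.2 x) (Icc 0 T ×ˢ Icc 0 T)) →
      ∀ x : H, ∀ s ∈ Icc (0 : ℝ) T, ∀ t ∈ Icc (0 : ℝ) T,
        IntervalIntegrable (fun r => U t r (F r s x)) MeasureTheory.volume s t := by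
    intro U hU x s hs t ht
    obtain ⟨U', hUc, ⟨C, _, hUb⟩, hUU⟩ := aux_clamp T hT U hU
    have h3 := (aux_cont3 U' F' C 0 hUc hFc (by simpa using hUb) x).comp
      (f := fun r : ℝ => ((t, s), r)) (by fun_prop)
    refine (h3.intervalIntegrable s t).congr fun r hr => ?_
    have hr' := uIcc_subset_Icc hs ht (uIoc_subset_uIcc hr)
    simp only [Function.comp, hFF r hr' s hs, hUU t ht r hr']
  refine ⟨V, ⟨hVc, hV'⟩, ?_⟩
  rintro V₂ ⟨hVc₂, hV₂⟩
  let D : ℝ → ℝ → H →L[ℂ] H := fun t s => V₂ t s - V t s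
  have hDc : ∀ x : H, ContinuousOn (fun p : ℝ × ℝ => D p.1 p.2 x) (Icc 0 T ×ˢ Icc 0 T) :=
    fun x => (hVc₂ x).sub (hVc x)
  have hD : ∀ x : H, ∀ s ∈ Icc (0 : ℝ) T, ∀ t ∈ Icc (0 : ℝ) T,
      D t s x = ∫ r in s..t, D t r (F r s x) := by
    intro x s hs t ht
    simp only [D, ContinuousLinearMap.sub_apply]
    rw [intervalIntegral.integral_sub (hint V₂ hVc₂ x s hs t ht) (hint V hVc x s hs t ht),
      hV₂ x s hs t ht, hV' x s hs t ht]
    abel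
  obtain ⟨D', _, ⟨C, hC, hDb⟩, hDD⟩ := aux_clamp T hT D hDc
  have key : ∀ n : ℕ, ∀ s ∈ Icc (0 : ℝ) T, ∀ t ∈ Icc (0 : ℝ) T,
      ‖D t s‖ ≤ C * K ^ n / n.factorial * |t - s| ^ n := by
    intro n
    induction n with
    | zero =>
      intro s hs t ht
      simpa [hDD t ht s hs] using hDb t s
    | succ n ih =>
      intro s hs t ht
      refine ContinuousLinearMap.opNorm_le_bound _ (by positivity) fun x => ?_
      rw [hD x s hs t ht]
      have := aux_bound D F (C * K ^ n / n.factorial) K (by positivity) n s t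
        (fun r hr => ih r (uIcc_subset_Icc hs ht hr) t ht)
        (fun r hr => by
          rw [← hFF r (uIcc_subset_Icc hs ht hr) s hs]; exact hFb r s) x
      rwa [aux_fact] at this
  intro s hs t ht
  have hlim : Filter.Tendsto (fun n : ℕ => C * K ^ n / n.factorial * |t - s| ^ n)
      Filter.atTop (nhds 0) := by
    have := (FloorSemiring.tendsto_pow_div_factorial_atTop (K * |t - s|)).const_mul C
    rw [mul_zero] at this
    refine this.congr fun n => ?_
    rw [mul_pow]; ring
  have h0 : ‖D t s‖ ≤ 0 := ge_of_tendsto' hlim fun n => key n s hs t ht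
  exact sub_eq_zero.1 (norm_le_zero_iff.1 h0)
end

section
/- There exists a constant c ∈ ℝ such that for all λ₁, λ₂ ∈ ℝ the following holds, where λ = |λ₁ − λ₂| + 1 and a is the operator on ℂ² given by the diagonal matrix diag(λ₁, λ₂): there exists a twice continuously differentiable family b : [0,1] → B(ℂ²) such that each b(t) is self-adjoint, ‖b(t)‖ ≤ 2 and ‖b'(t)‖ ≤ c·λ for all t ∈ [0,1], b(0) = b(1) = 0, and every differentiable q : [0,1] → B(ℂ²) satisfying q(0) = I and q'(t) = i(a + b(t))q(t) for all t ∈ [0,1] has q(1)e₁ ∈ ℂ·e₂, where e₁, e₂ denote the standard basis vectors of ℂ². -/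
open Set

/-- The self-adjoint off-diagonal operator with entry `z`. -/
noncomputable def offD (z : ℂ) : EuclideanSpace ℂ (Fin 2) →L[ℂ] EuclideanSpace ℂ (Fin 2) :=
  Matrix.toEuclideanCLM (𝕜 := ℂ) !![0, z; star z, 0]

/-- Elementary operator. -/
noncomputable def opA : EuclideanSpace ℂ (Fin 2) →L[ℂ] EuclideanSpace ℂ (Fin 2) :=
  Matrix.toEuclideanCLM (𝕜 := ℂ) !![0, 1; 0, 0]
/-- Elementary operator. -/
noncomputable def opB : EuclideanSpace ℂ (Fin 2) →L[ℂ] EuclideanSpace ℂ (Fin 2) :=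
  Matrix.toEuclideanCLM (𝕜 := ℂ) !![0, 0; 1, 0]

lemma tE_apply (A : Matrix (Fin 2) (Fin 2) ℂ) (x : EuclideanSpace ℂ (Fin 2)) (i : Fin 2) :
    Matrix.toEuclideanCLM (𝕜 := ℂ) A x i = A i 0 * x 0 + A i 1 * x 1 := by
  rw [Matrix.ofLp_toEuclideanCLM, Matrix.mulVec, dotProduct, Fin.sum_univ_two]

lemma offD_apply_zero (z : ℂ) (x : EuclideanSpace ℂ (Fin 2)) : offD z x 0 = z * x 1 := by
  simp [offD, tE_apply]

lemma offD_apply_one (z : ℂ) (x : EuclideanSpace ℂ (Fin 2)) : offD z x 1 = star z * x 0 := by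
  simp [offD, tE_apply]

lemma offD_eq (z : ℂ) : offD z = z • opA + (star z) • opB := by
  ext x i
  fin_cases i <;> simp [offD, opA, opB, tE_apply]

lemma offD_norm (z : ℂ) : ‖offD z‖ ≤ ‖z‖ := by
  refine ContinuousLinearMap.opNorm_le_bound _ (norm_nonneg _) fun x => ?_
  refine le_of_eq ?_
  rw [EuclideanSpace.norm_eq, EuclideanSpace.norm_eq, Fin.sum_univ_two, Fin.sum_univ_two,
    offD_apply_zero, offD_apply_one, norm_mul, norm_mul, norm_star]
  rw [← Real.sqrt_sq (norm_nonneg z), ← Real.sqrt_mul (sq_nonneg _), Real.sqrt_sq (norm_nonneg z)]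
  congr 1
  ring

lemma offD_zero : offD 0 = 0 := by
  simpa using offD_norm 0

lemma offD_sa (z : ℂ) : IsSelfAdjoint (offD z) := by
  unfold offD
  refine IsSelfAdjoint.map ?_ _
  rw [IsSelfAdjoint]
  ext i j
  fin_cases i <;> fin_cases j <;> simp [Matrix.star_apply]

lemma offD_deriv {z : ℝ → ℂ} {z' : ℂ} {t : ℝ} (h : HasDerivAt z z' t) :
    HasDerivAt (fun t => offD (z t)) (offD z') t := by
  simp only [offD_eq]
  have h2 : HasDerivAt (fun t => star (z t)) (star z') t := h.star
  exact (h.smul_const opA).add (h2.smul_const opB)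

lemma offD_cont : Continuous offD := by
  have : offD = fun z => _ := funext offD_eq
  rw [this]
  fun_prop

lemma hasDerivAt_ce (D t : ℝ) :
    HasDerivAt (fun t : ℝ => Complex.exp (Complex.I * D * t))
      (Complex.I * D * Complex.exp (Complex.I * D * t)) t := by
  have h : HasDerivAt (fun t : ℝ => Complex.I * D * (t : ℂ)) (Complex.I * D) t := by
    simpa using (Complex.ofRealCLM.hasDerivAt (x := t)).const_mul (Complex.I * D)
  simpa [mul_comm] using h.cexp

lemma norm_ce (D t : ℝ) : ‖Complex.exp (Complex.I * D * t)‖ = 1 := by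
  rw [Complex.norm_exp]; simp

/-- Pulse profile. -/
noncomputable def pf (t : ℝ) : ℝ := 5 * Real.pi / 8 * (1 - (2 * t - 1) ^ 4)
/-- Its derivative. -/
noncomputable def pf1 (t : ℝ) : ℝ := 5 * Real.pi / 8 * (-8 * (2 * t - 1) ^ 3)
/-- Its second derivative. -/
noncomputable def pf2 (t : ℝ) : ℝ := 5 * Real.pi / 8 * (-48 * (2 * t - 1) ^ 2)
/-- Its primitive. -/
noncomputable def pth (t : ℝ) : ℝ := 5 * Real.pi / 8 * (t - ((2 * t - 1) ^ 5 + 1) / 10)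

lemma hasDerivAt_lin (t : ℝ) : HasDerivAt (fun t : ℝ => 2 * t - 1) 2 t := by
  simpa using ((hasDerivAt_id t).const_mul 2).sub_const 1

lemma pth_deriv (t : ℝ) : HasDerivAt pth (pf t) t := by
  have := ((hasDerivAt_id t).sub ((((hasDerivAt_lin t).pow 5).add_const 1).div_const 10)).const_mul
    (5 * Real.pi / 8)
  refine this.congr_deriv ?_
  simp [pf]; ring

lemma pf_deriv (t : ℝ) : HasDerivAt pf (pf1 t) t := by
  have := (((hasDerivAt_lin t).pow 4).const_sub 1).const_mul (5 * Real.pi / 8)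
  refine this.congr_deriv ?_
  simp [pf1]; ring

lemma pf1_deriv (t : ℝ) : HasDerivAt pf1 (pf2 t) t := by
  have := (((hasDerivAt_lin t).pow 3).const_mul (-8)).const_mul (5 * Real.pi / 8)
  refine this.congr_deriv ?_
  simp [pf2]; ring

lemma pf_bound {t : ℝ} (ht : t ∈ Icc (0 : ℝ) 1) : |pf t| ≤ 2 := by
  have h1 : |2 * t - 1| ≤ 1 := abs_le.2 ⟨by linarith [ht.1], by linarith [ht.2]⟩
  have h2 : (2 * t - 1) ^ 4 ≤ 1 := by
    rw [← Even.pow_abs (by decide)]; exact pow_le_one₀ (abs_nonneg _) h1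
  have h3 : 0 ≤ (2 * t - 1) ^ 4 := by positivity
  have hp := Real.pi_pos
  have hp2 := Real.pi_lt_d2
  unfold pf
  rw [abs_of_nonneg (mul_nonneg (by positivity) (by linarith))]
  nlinarith

lemma pf1_bound {t : ℝ} (ht : t ∈ Icc (0 : ℝ) 1) : |pf1 t| ≤ 16 := by
  have h1 : |2 * t - 1| ≤ 1 := abs_le.2 ⟨by linarith [ht.1], by linarith [ht.2]⟩
  have h2 : |2 * t - 1| ^ 3 ≤ 1 := pow_le_one₀ (abs_nonneg _) h1
  have h3 : 0 ≤ |2 * t - 1| ^ 3 := by positivity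
  have hp := Real.pi_pos
  have hp2 := Real.pi_lt_d2
  unfold pf1
  rw [abs_mul, abs_mul, abs_pow, abs_of_pos (by positivity : 0 < 5 * Real.pi / 8)]
  norm_num
  nlinarith

lemma z_deriv (D t : ℝ) : HasDerivAt (fun t : ℝ => (pf t : ℂ) * Complex.exp (Complex.I * D * t))
    ((pf1 t + Complex.I * D * pf t) * Complex.exp (Complex.I * D * t)) t := by
  refine ((pf_deriv t).ofReal_comp.mul (hasDerivAt_ce D t)).congr_deriv ?_
  ring

lemma z1_deriv (D t : ℝ) : HasDerivAt
    (fun t : ℝ => ((pf1 t : ℂ) + Complex.I * D * pf t) * Complex.exp (Complex.I * D * t))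
    ((pf2 t + Complex.I * D * pf1 t + Complex.I * D * (pf1 t + Complex.I * D * pf t))
      * Complex.exp (Complex.I * D * t)) t := by
  refine (((pf1_deriv t).ofReal_comp.add ((pf_deriv t).ofReal_comp.const_mul
    (Complex.I * D))).mul (hasDerivAt_ce D t)).congr_deriv ?_
  simp only [Pi.add_apply]
  ring

lemma z2_cont (D : ℝ) : Continuous fun t : ℝ =>
    ((pf2 t + Complex.I * D * pf1 t + Complex.I * D * (pf1 t + Complex.I * D * pf t))
      * Complex.exp (Complex.I * D * t)) := by
  unfold pf pf1 pf2
  fun_prop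




/-- There exists a constant `c ∈ ℝ` such that for all `λ₁, λ₂ ∈ ℝ` the
following holds, where `λ = |λ₁ − λ₂| + 1` and `a` is the operator on `ℂ²` given by the
diagonal matrix `diag(λ₁, λ₂)`: there exists a twice continuously differentiable family
`b : [0,1] → B(ℂ²)` such that each `b(t)` is self-adjoint, `‖b(t)‖ ≤ 2` and `‖b'(t)‖ ≤ c·λ`
for all `t ∈ [0,1]`, `b(0) = b(1) = 0`, and every differentiable `q : [0,1] → B(ℂ²)`
satisfying `q(0) = I` and `q'(t) = i(a + b(t))q(t)` for all `t ∈ [0,1]` has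
`q(1)e₁ ∈ ℂ·e₂`. -/
theorem statement19 :
    ∃ c : ℝ, ∀ lam₁ lam₂ : ℝ,
      ∃ b b' b'' : ℝ → EuclideanSpace ℂ (Fin 2) →L[ℂ] EuclideanSpace ℂ (Fin 2),
        (∀ t ∈ Icc (0 : ℝ) 1, HasDerivWithinAt b (b' t) (Icc (0 : ℝ) 1) t) ∧
        (∀ t ∈ Icc (0 : ℝ) 1, HasDerivWithinAt b' (b'' t) (Icc (0 : ℝ) 1) t) ∧
        ContinuousOn b'' (Icc (0 : ℝ) 1) ∧
        (∀ t ∈ Icc (0 : ℝ) 1, IsSelfAdjoint (b t)) ∧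
        (∀ t ∈ Icc (0 : ℝ) 1, ‖b t‖ ≤ 2) ∧
        (∀ t ∈ Icc (0 : ℝ) 1, ‖b' t‖ ≤ c * (|lam₁ - lam₂| + 1)) ∧
        b 0 = 0 ∧ b 1 = 0 ∧
        ∀ q : ℝ → EuclideanSpace ℂ (Fin 2) →L[ℂ] EuclideanSpace ℂ (Fin 2),
          q 0 = 1 →
          (∀ t ∈ Icc (0 : ℝ) 1,
            HasDerivWithinAt q
              (Complex.I •
                ((Matrix.toEuclideanCLM (𝕜 := ℂ)
                    (Matrix.diagonal ![(lam₁ : ℂ), (lam₂ : ℂ)]) + b t).comp (q t)))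
              (Icc (0 : ℝ) 1) t) →
          ∃ μ : ℂ,
            q 1 (EuclideanSpace.single (0 : Fin 2) (1 : ℂ)) =
              μ • EuclideanSpace.single (1 : Fin 2) (1 : ℂ) := by
  refine ⟨16, fun l₁ l₂ => ?_⟩
  refine ⟨_, _, _, fun t _ => (offD_deriv (z_deriv (l₁ - l₂) t)).hasDerivWithinAt,
    fun t _ => (offD_deriv (z1_deriv (l₁ - l₂) t)).hasDerivWithinAt,
    (offD_cont.comp (z2_cont (l₁ - l₂))).continuousOn, fun t _ => offD_sa _,
    fun t ht => ?_, fun t ht => ?_, ?_, ?_, ?_⟩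
  · refine (offD_norm _).trans ?_
    rw [norm_mul, norm_ce, mul_one, Complex.norm_real]
    exact pf_bound ht
  · refine (offD_norm _).trans ?_
    rw [norm_mul, norm_ce, mul_one]
    refine (norm_add_le _ _).trans ?_
    rw [norm_mul, norm_mul, Complex.norm_I, Complex.norm_real, Complex.norm_real,
      Complex.norm_real, Real.norm_eq_abs, Real.norm_eq_abs, Real.norm_eq_abs]
    have h1 := pf_bound ht
    have h2 := pf1_bound ht
    have h3 := abs_nonneg (l₁ - l₂)
    nlinarith
  · have h : pf 0 = 0 := by norm_num [pf]
    simp [h, offD_zero]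
  · have h : pf 1 = 0 := by norm_num [pf]
    simp [h, offD_zero]
  · intro q hq0 hq
    set e : EuclideanSpace ℂ (Fin 2) := EuclideanSpace.single (0 : Fin 2) (1 : ℂ) with he
    have hv : ∀ t ∈ Icc (0 : ℝ) 1, ∀ i : Fin 2, HasDerivWithinAt (fun t => q t e i)
        ((Complex.I • ((Matrix.toEuclideanCLM (𝕜 := ℂ)
          (Matrix.diagonal ![(l₁ : ℂ), (l₂ : ℂ)]) +
            offD ((pf t : ℂ) * Complex.exp (Complex.I * ((l₁ - l₂ : ℝ) : ℂ) * t))).comp (q t)))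
            e i) (Icc (0 : ℝ) 1) t := by
      intro t ht i
      let L : (EuclideanSpace ℂ (Fin 2) →L[ℂ] EuclideanSpace ℂ (Fin 2)) →L[ℂ] ℂ :=
        (EuclideanSpace.proj i).comp (ContinuousLinearMap.apply ℂ _ e)
      exact (L.restrictScalars ℝ).hasFDerivAt.comp_hasDerivWithinAt t (hq t ht)
    have hv0 : ∀ t ∈ Icc (0 : ℝ) 1, HasDerivWithinAt (fun t => q t e 0)
        (Complex.I * (l₁ * q t e 0 +
          pf t * Complex.exp (Complex.I * ((l₁ - l₂ : ℝ) : ℂ) * t) * q t e 1))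
          (Icc (0 : ℝ) 1) t := by
      intro t ht
      refine (hv t ht 0).congr_deriv ?_
      simp [offD_apply_zero, tE_apply]
      ring
    have hv1 : ∀ t ∈ Icc (0 : ℝ) 1, HasDerivWithinAt (fun t => q t e 1)
        (Complex.I * (l₂ * q t e 1 +
          pf t * Complex.exp (Complex.I * ((l₂ - l₁ : ℝ) : ℂ) * t) * q t e 0))
          (Icc (0 : ℝ) 1) t := by
      intro t ht
      refine (hv t ht 1).congr_deriv ?_
      have hc : star (Complex.exp (Complex.I * ((l₁ - l₂ : ℝ) : ℂ) * t)) =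
          Complex.exp (Complex.I * ((l₂ - l₁ : ℝ) : ℂ) * t) := by
        rw [Complex.star_def, ← Complex.exp_conj]
        congr 1
        simp only [map_mul, Complex.conj_I, Complex.conj_ofReal]
        push_cast
        ring
      have hs : star ((pf t : ℂ)) = pf t := Complex.conj_ofReal _
      rw [smul_apply, PiLp.smul_apply, ContinuousLinearMap.comp_apply,
        add_apply, PiLp.add_apply, offD_apply_one, star_mul', hc, hs]
      simp [tE_apply]
    have hh : ∀ t ∈ Icc (0 : ℝ) 1, HasDerivWithinAt
        (fun t : ℝ => Complex.exp (Complex.I * ((-l₁ : ℝ) : ℂ) * t) * q t e 0 *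
            ((Real.sin (pth t) : ℝ) : ℂ) +
          Complex.I * (Complex.exp (Complex.I * ((-l₂ : ℝ) : ℂ) * t) * q t e 1 *
            ((Real.cos (pth t) : ℝ) : ℂ))) 0 (Icc (0 : ℝ) 1) t := by
      intro t ht
      have hS := (pth_deriv t).sin.ofReal_comp.hasDerivWithinAt (s := Icc (0 : ℝ) 1)
      have hC := (pth_deriv t).cos.ofReal_comp.hasDerivWithinAt (s := Icc (0 : ℝ) 1)
      have h1 := (((hasDerivAt_ce (-l₁) t).hasDerivWithinAt (s := Icc (0 : ℝ) 1)).mul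
        (hv0 t ht)).mul hS
      have h2 := ((((hasDerivAt_ce (-l₂) t).hasDerivWithinAt (s := Icc (0 : ℝ) 1)).mul
        (hv1 t ht)).mul hC).const_mul Complex.I
      refine (h1.add h2).congr_deriv ?_
      have e1 : Complex.exp (Complex.I * ((l₁ - l₂ : ℝ) : ℂ) * t) *
          Complex.exp (Complex.I * ((-l₁ : ℝ) : ℂ) * t) =
          Complex.exp (Complex.I * ((-l₂ : ℝ) : ℂ) * t) := by
        rw [← Complex.exp_add]; congr 1; push_cast; ring
      have e2 : Complex.exp (Complex.I * ((l₂ - l₁ : ℝ) : ℂ) * t) *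
          Complex.exp (Complex.I * ((-l₂ : ℝ) : ℂ) * t) =
          Complex.exp (Complex.I * ((-l₁ : ℝ) : ℂ) * t) := by
        rw [← Complex.exp_add]; congr 1; push_cast; ring
      simp only [Pi.mul_apply]
      generalize Complex.exp (Complex.I * ((l₁ - l₂ : ℝ) : ℂ) * t) = w at *
      generalize Complex.exp (Complex.I * ((l₂ - l₁ : ℝ) : ℂ) * t) = w' at *
      generalize Complex.exp (Complex.I * ((-l₁ : ℝ) : ℂ) * t) = x at *
      generalize Complex.exp (Complex.I * ((-l₂ : ℝ) : ℂ) * t) = y at *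
      push_cast
      generalize Complex.sin (pth t : ℂ) = S
      generalize Complex.cos (pth t : ℂ) = C
      generalize q t e 0 = a
      generalize q t e 1 = b
      have hI := Complex.I_mul_I
      generalize Complex.I = J at *
      linear_combination (J * pf t * b * S) * e1 + (J * J * pf t * a * C) * e2
        + (pf t * x * a * C) * hI
    have key := constant_of_has_deriv_right_zero
      (fun t ht => (hh t ht).continuousWithinAt)
      (fun t ht => (hh t (Ico_subset_Icc_self ht)).mono_of_mem_nhdsWithin
        (Icc_mem_nhdsGE_of_mem ht)) 1 (by simp)
    have p0 : pth 0 = 0 := by norm_num [pth]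
    have p1 : pth 1 = Real.pi / 2 := by norm_num [pth]; ring
    have hq1 : q 1 e 0 = 0 := by
      simpa [p0, p1, hq0, he] using key
    refine ⟨q 1 e 1, ?_⟩
    ext i
    fin_cases i
    · simpa using hq1
    · simp
end
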